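/- Assume the projected overmaximised flow is invertible: id×π𝓗 : (t,ℓ) ↦ (t, π𝓗_t(ℓ)) is a homeomorphism of [0,T]×Λ onto a neighborhood 𝒰 of the graph of ξ̂ in [0,T]×ℝⁿ with locally Lipschitz inverse, where π(p,x):=x. Then ξ̂ minimizes the modified cost among nearby admissible trajectories: every admissible trajectory ξ on [0,T] whose graph is contained in 𝒰 satisfies c̃(ξ(T)) ≥ c̃(ξ̂(T)). (Optimality assertion of Theorem 4.1.) -/

import Mathlib

open MeasureTheory Set
open scoped InnerProductSpace NNReal

noncomputable section

/-- Euclidean state space. -/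
abbrev E (n : ℕ) := EuclideanSpace ℝ (Fin n)

/-- The standard simplex `Δ ⊆ ℝᵐ`. -/
def simplex (m : ℕ) : Set (Fin m → ℝ) :=
  {u | (∀ i, 0 ≤ u i) ∧ ∑ i, u i = 1}

/-- `𝒳(x)`: the closed convex hull of the values `X₁(x), …, X_m(x)`. -/
def chull {n m : ℕ} (X : Fin m → (E n → E n)) (x : E n) : Set (E n) :=
  {v | ∃ u ∈ simplex m, v = ∑ i, u i • X i x}

/-- Admissible trajectories of the differential inclusion `ξ̇ ∈ 𝒳(ξ)`, `ξ(0) = x₀`. -/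
def Admissible {n m : ℕ} (X : Fin m → (E n → E n)) (x₀ : E n) (T : ℝ)
    (ξ : ℝ → E n) : Prop :=
  (∃ K : ℝ≥0, LipschitzOnWith K ξ (Icc 0 T)) ∧ ξ 0 = x₀ ∧
    ∀ᵐ t, t ∈ Ioo 0 T → ∃ v ∈ chull X (ξ t), HasDerivAt ξ v t

/-- Hamiltonian vector field `⃗H = (−∂ₓH, ∂ₚH)` on `T*ℝⁿ ≃ ℝⁿ × ℝⁿ`, `ℓ = (p,x)`. -/
def hamVF {n : ℕ} (H : E n × E n → ℝ) (ℓ : E n × E n) : E n × E n :=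
  (-gradient (fun x => H (ℓ.1, x)) ℓ.2, gradient (fun p => H (p, ℓ.2)) ℓ.1)

section OvermaxHelpers

set_option linter.unusedSectionVars false

open Filter Topology Asymptotics

lemma aux_lip_ac {f : ℝ → ℝ} {T M : ℝ}
    (hM : ∀ s ∈ Icc 0 T, ∀ t ∈ Icc 0 T, |f s - f t| ≤ M * |s - t|)
    {a b : ℝ} (ha : a ∈ Icc 0 T) (hb : b ∈ Icc 0 T) :
    AbsolutelyContinuousOnInterval f a b := by
  have : LipschitzOnWith M.toNNReal f (uIcc a b) := by
    apply LipschitzOnWith.of_dist_le_mul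
    intro s hs t ht
    have h1 : uIcc a b ⊆ Icc 0 T := ordConnected_Icc.uIcc_subset ha hb
    rw [Real.dist_eq, Real.dist_eq]
    refine (hM s (h1 hs) t (h1 ht)).trans ?_
    gcongr
    exact Real.le_coe_toNNReal M
  exact this.absolutelyContinuousOnInterval

lemma aux_lip_ftc {f g : ℝ → ℝ} {T M : ℝ}
    (hM : ∀ s ∈ Icc 0 T, ∀ t ∈ Icc 0 T, |f s - f t| ≤ M * |s - t|)
    (hd : ∀ᵐ t, t ∈ Icc 0 T → HasDerivAt f (g t) t)
    {a b : ℝ} (ha : a ∈ Icc 0 T) (hb : b ∈ Icc 0 T) :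
    IntervalIntegrable g volume a b ∧ ∫ s in a..b, g s = f b - f a := by
  have hac := aux_lip_ac hM ha hb
  have h1 : uIcc a b ⊆ Icc 0 T := ordConnected_Icc.uIcc_subset ha hb
  have hae : ∀ᵐ t, t ∈ uIoc a b → deriv f t = g t := by
    filter_upwards [hd] with t ht hmem
    exact (ht (h1 (uIoc_subset_uIcc hmem))).deriv
  refine ⟨?_, ?_⟩
  · refine hac.intervalIntegrable_deriv.congr_ae ?_
    rw [Filter.EventuallyEq, ae_restrict_iff' measurableSet_uIoc]
    exact hae
  · rw [← hac.integral_deriv_eq_sub]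
    apply intervalIntegral.integral_congr_ae
    filter_upwards [hae] with t ht hmem
    exact (ht hmem).symm

lemma aux_lip_mono {f : ℝ → ℝ} {T M : ℝ} (hT : 0 < T)
    (hM : ∀ s ∈ Icc 0 T, ∀ t ∈ Icc 0 T, |f s - f t| ≤ M * |s - t|)
    (hd : ∀ᵐ t, t ∈ Ioo 0 T → ∀ d, HasDerivAt f d t → d ≤ 0) :
    f T ≤ f 0 := by
  have h0 : (0:ℝ) ∈ Icc 0 T := ⟨le_rfl, hT.le⟩
  have h1 : T ∈ Icc 0 T := ⟨hT.le, le_rfl⟩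
  have h2 := (aux_lip_ac hM h0 h1).integral_deriv_eq_sub
  have h3 : ∫ x in (0:ℝ)..T, deriv f x ≤ 0 := by
    rw [intervalIntegral.integral_of_le hT.le, integral_Ioc_eq_integral_Ioo]
    apply integral_nonpos_of_ae
    rw [Filter.EventuallyLE, ae_restrict_iff' measurableSet_Ioo]
    filter_upwards [hd] with t ht hmem
    by_cases hdf : DifferentiableAt ℝ f t
    · exact ht hmem _ hdf.hasDerivAt
    · simp [deriv_zero_of_not_differentiableAt hdf]
  linarith

lemma aux_convex_local_lip {V : Type*} [NormedAddCommGroup V] [NormedSpace ℝ V]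
    {C : Set V} (hC : Convex ℝ C) {f : V → ℝ} {B : ℝ}
    (hf : ∀ x ∈ C, ∀ᶠ x' in 𝓝[C] x, |f x' - f x| ≤ B * ‖x' - x‖)
    {x x' : V} (hx : x ∈ C) (hx' : x' ∈ C) : f x' - f x ≤ B * ‖x' - x‖ := by
  set γ : ℝ → V := fun r => x + r • (x' - x) with hγ
  have hγC : ∀ r ∈ Icc (0:ℝ) 1, γ r ∈ C := fun r hr => hC.add_smul_sub_mem hx hx' hr
  have hγc : Continuous γ := by fun_prop
  have hγt : ∀ r ∈ Icc (0:ℝ) 1, Tendsto γ (𝓝[Icc 0 1] r) (𝓝[C] (γ r)) := by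
    intro r hr
    apply tendsto_nhdsWithin_of_tendsto_nhds_of_eventually_within
    · exact hγc.continuousAt.tendsto.mono_left nhdsWithin_le_nhds
    · filter_upwards [self_mem_nhdsWithin] with s hs using hγC s hs
  have hfc : ContinuousOn f C := by
    intro z hz
    have h1 : Tendsto (fun x' => B * ‖x' - z‖) (𝓝[C] z) (𝓝 0) := by
      have : Continuous (fun x' => B * ‖x' - z‖) := by fun_prop
      simpa using (this.tendsto z).mono_left (nhdsWithin_le_nhds (s := C))
    rw [ContinuousWithinAt, tendsto_iff_dist_tendsto_zero]
    refine squeeze_zero' (Eventually.of_forall fun _ => dist_nonneg) ?_ h1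
    filter_upwards [hf z hz] with w hw
    rwa [Real.dist_eq]
  have key := image_le_of_liminf_slope_right_le_deriv_boundary (f := fun r => f (γ r))
    (a := 0) (b := 1) (hfc.comp hγc.continuousOn hγC)
    (B := fun r => f x + r * (B * ‖x' - x‖)) (B' := fun _ => B * ‖x' - x‖)
    (by simp [hγ]) (by fun_prop)
    (fun r _ => by
      have := ((hasDerivAt_id r).mul_const (B * ‖x' - x‖)).const_add (f x)
      simpa using this.hasDerivWithinAt)
    (by
      intro r hr ρ hρ
      apply Eventually.frequently
      have hr' : r ∈ Icc (0:ℝ) 1 := ⟨hr.1, hr.2.le⟩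
      have h2 : 𝓝[>] r ≤ 𝓝[Icc 0 1] r := by
        rw [← nhdsWithin_Ioc_eq_nhdsGT hr.2]
        exact nhdsWithin_mono _ (fun s hs => ⟨hr.1.trans hs.1.le, hs.2⟩)
      have h3 := ((hγt r hr').mono_left h2).eventually (hf _ (hγC r hr'))
      filter_upwards [h3, self_mem_nhdsWithin] with s hs hsr
      have hsr' : 0 < s - r := sub_pos.2 hsr
      refine lt_of_le_of_lt ?_ hρ
      rw [slope_def_field, div_le_iff₀ hsr']
      refine (le_abs_self _).trans (hs.trans ?_)
      have : γ s - γ r = (s - r) • (x' - x) := by simp only [hγ]; module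
      rw [this, norm_smul, Real.norm_eq_abs, abs_of_pos hsr']
      apply le_of_eq; ring)
  have := key (right_mem_Icc.2 zero_le_one)
  simp only [hγ, one_smul, add_sub_cancel, one_mul] at this
  linarith

lemma aux_compact_hull {V : Type*} [NormedAddCommGroup V] [NormedSpace ℝ V]
    [FiniteDimensional ℝ V] {O K : Set V} (hO : IsOpen O) (hOc : Convex ℝ O)
    (hK : IsCompact K) (hKO : K ⊆ O) :
    ∃ C, IsCompact C ∧ Convex ℝ C ∧ K ⊆ C ∧ C ⊆ O := by
  have h1 : ∀ x ∈ K, ∃ u : Finset V, x ∈ interior (convexHull ℝ (u : Set V)) ∧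
      convexHull ℝ (u : Set V) ⊆ O := by
    intro x hx
    obtain ⟨u, hu, hu'⟩ := Convex.exists_subset_interior_convexHull_finset_of_isCompact
      (convex_singleton (𝕜 := ℝ) x) isCompact_singleton (t := O)
      (by rw [nhdsSet_singleton]; exact hO.mem_nhds (hKO hx))
    exact ⟨u, hu rfl, hu'⟩
  choose! u hu hu' using h1
  obtain ⟨F, hF, hcov⟩ := hK.elim_nhds_subcover (fun x => interior (convexHull ℝ (u x : Set V)))
    (fun x hx => isOpen_interior.mem_nhds (hu x hx))
  have hfin : (⋃ x ∈ F, (u x : Set V)).Finite :=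
    F.finite_toSet.biUnion (fun x _ => (u x).finite_toSet)
  refine ⟨convexHull ℝ (⋃ x ∈ F, (u x : Set V)), hfin.isCompact_convexHull ℝ,
    convex_convexHull ℝ _, ?_, ?_⟩
  · refine hcov.trans (iUnion₂_subset fun x hx => interior_subset.trans ?_)
    exact convexHull_mono (subset_biUnion_of_mem (u := fun x => (u x : Set V)) hx)
  · apply convexHull_min _ hOc
    exact iUnion₂_subset fun x hx => (subset_convexHull ℝ _).trans (hu' x (hF x hx))

/-- Regularity data of the flow in the coordinates `(t,x)`. -/
structure CoreData {V : Type*} [NormedAddCommGroup V] [InnerProductSpace ℝ V]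
    (T M : ℝ) (C : Set V) (P Q w v : ℝ → V → V) (h : ℝ → V → ℝ) (c : V → ℝ) : Prop where
  hT : 0 < T
  hM : 0 ≤ M
  lipP : ∀ t ∈ Icc 0 T, ∀ s ∈ Icc 0 T, ∀ x ∈ C, ∀ x' ∈ C,
    ‖P t x - P s x'‖ ≤ M * (|t - s| + ‖x - x'‖)
  lipQ : ∀ t ∈ Icc 0 T, ∀ s ∈ Icc 0 T, ∀ x ∈ C, ∀ x' ∈ C,
    ‖Q t x - Q s x'‖ ≤ M * (|t - s| + ‖x - x'‖)
  bdP : ∀ t ∈ Icc 0 T, ∀ x ∈ C, ‖P t x‖ ≤ M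
  bdC : ∀ x ∈ C, ∀ x' ∈ C, ‖x - x'‖ ≤ M
  derP : ∀ x ∈ C, ∀ᵐ t, t ∈ Icc 0 T → HasDerivAt (fun s => P s x) (w t x) t
  derQ : ∀ x ∈ C, ∀ᵐ t, t ∈ Icc 0 T → HasDerivAt (fun s => Q s x) (v t x) t
  bd : ∀ᵐ t, t ∈ Icc 0 T → ∀ x ∈ C, ‖w t x‖ ≤ M ∧ ‖v t x‖ ≤ M ∧ |h t x| ≤ M
  lipH : ∀ᵐ t, t ∈ Icc 0 T → ∀ x ∈ C, ∀ x' ∈ C, |h t x' - h t x| ≤ M * ‖x' - x‖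
  small : ∀ᵐ t, t ∈ Icc 0 T → ∀ x ∈ C,
    (fun x' => ⟪P t x' - P t x, v t x'⟫_ℝ - ⟪w t x, Q t x' - Q t x⟫_ℝ - (h t x' - h t x))
      =o[𝓝[C] x] (fun x' => x' - x)
  meas : ∀ x ∈ C, AEStronglyMeasurable (fun t => h t x) (volume.restrict (Icc 0 T))
  term : ∀ x ∈ C, (fun x' => -c x' + c x - ⟪P T x, x' - x⟫_ℝ) =o[𝓝[C] x] (fun x' => x' - x)
  lipc : ∀ x ∈ C, ∀ x' ∈ C, |c x' - c x| ≤ M * ‖x' - x‖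
  termQ : ∀ x ∈ C, Q T x = x

namespace CoreData

variable {V : Type*} [NormedAddCommGroup V] [InnerProductSpace ℝ V] [FiniteDimensional ℝ V]
  {T M : ℝ} {C : Set V} {P Q w v : ℝ → V → V} {h : ℝ → V → ℝ} {c : V → ℝ}

lemma T_mem (D : CoreData T M C P Q w v h c) : T ∈ Icc 0 T := ⟨D.hT.le, le_rfl⟩

lemma int_h (D : CoreData T M C P Q w v h c) {x : V} (hx : x ∈ C) {a b : ℝ}
    (ha : a ∈ Icc 0 T) (hb : b ∈ Icc 0 T) :
    IntervalIntegrable (fun s => h s x) volume a b := by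
  have h1 : IntegrableOn (fun s => h s x) (Icc 0 T) := by
    refine Integrable.of_bound (D.meas x hx) M ?_
    rw [ae_restrict_iff' measurableSet_Icc]
    filter_upwards [D.bd] with t ht hmem using (ht hmem x hx).2.2
  exact (h1.mono_set (ordConnected_Icc.uIcc_subset ha hb)).intervalIntegrable

lemma int_pv (D : CoreData T M C P Q w v h c) {x : V} (hx : x ∈ C) {a b : ℝ}
    (ha : a ∈ Icc 0 T) (hb : b ∈ Icc 0 T) :
    IntervalIntegrable (fun s => ⟪P s x, v s x⟫_ℝ) volume a b := by
  have hP : ContinuousOn (fun s => P s x) (Icc 0 T) := by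
    have : LipschitzOnWith M.toNNReal (fun s => P s x) (Icc 0 T) := by
      apply LipschitzOnWith.of_dist_le_mul
      intro s hs t ht
      have := D.lipP s hs t ht x hx x hx
      rw [dist_eq_norm, Real.dist_eq, Real.coe_toNNReal _ D.hM]
      simpa using this
    exact this.continuousOn
  have hv : AEStronglyMeasurable (fun s => v s x) (volume.restrict (Icc 0 T)) := by
    have h1 := (stronglyMeasurable_deriv (𝕜 := ℝ) (fun s => Q s x)).aestronglyMeasurable
      (μ := volume.restrict (Icc 0 T))
    refine h1.congr ?_
    rw [Filter.EventuallyEq, ae_restrict_iff' measurableSet_Icc]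
    filter_upwards [D.derQ x hx] with t ht hmem using (ht hmem).deriv
  have h1 : IntegrableOn (fun s => ⟪P s x, v s x⟫_ℝ) (Icc 0 T) := by
    refine Integrable.of_bound
      ((hP.aestronglyMeasurable measurableSet_Icc).inner hv) (M * M) ?_
    rw [ae_restrict_iff' measurableSet_Icc]
    filter_upwards [D.bd] with t ht hmem
    refine (norm_inner_le_norm _ _).trans ?_
    exact mul_le_mul (D.bdP t hmem x hx) (ht hmem x hx).2.1 (norm_nonneg _) D.hM
  exact (h1.mono_set (ordConnected_Icc.uIcc_subset ha hb)).intervalIntegrable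

/-- The integrand `R`. -/
def R (P Q w v : ℝ → V → V) (h : ℝ → V → ℝ) (x x' : V) (t : ℝ) : ℝ :=
  ⟪P t x' - P t x, v t x'⟫_ℝ - ⟪w t x, Q t x' - Q t x⟫_ℝ - (h t x' - h t x)

/-- The generating function. -/
def W (T : ℝ) (P v : ℝ → V → V) (h : ℝ → V → ℝ) (c : V → ℝ) (t : ℝ) (x : V) : ℝ :=
  -c x - ∫ s in t..T, (⟪P s x, v s x⟫_ℝ - h s x)

lemma bdR (D : CoreData T M C P Q w v h c) : ∀ᵐ t, t ∈ Icc 0 T → ∀ x ∈ C, ∀ x' ∈ C,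
    |R P Q w v h x x' t| ≤ (2 * M * M + M) * ‖x' - x‖ := by
  filter_upwards [D.bd, D.lipH] with t h1 h2 hmem x hx x' hx'
  have e1 : |⟪P t x' - P t x, v t x'⟫_ℝ| ≤ (M * ‖x' - x‖) * M := by
    refine (abs_real_inner_le_norm _ _).trans ?_
    have := D.lipP t hmem t hmem x' hx' x hx
    simp only [sub_self, abs_zero, zero_add] at this
    exact mul_le_mul this (h1 hmem x' hx').2.1 (norm_nonneg _)
      (mul_nonneg D.hM (norm_nonneg _))
  have e2 : |⟪w t x, Q t x' - Q t x⟫_ℝ| ≤ M * (M * ‖x' - x‖) := by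
    refine (abs_real_inner_le_norm _ _).trans ?_
    have := D.lipQ t hmem t hmem x' hx' x hx
    simp only [sub_self, abs_zero, zero_add] at this
    exact mul_le_mul (h1 hmem x hx).1 this (norm_nonneg _) D.hM
  have e3 := h2 hmem x hx x' hx'
  unfold R
  rw [abs_le] at *
  constructor <;> nlinarith

lemma ftcR (D : CoreData T M C P Q w v h c) {x x' : V} (hx : x ∈ C) (hx' : x' ∈ C) {t : ℝ}
    (ht : t ∈ Icc 0 T) :
    IntervalIntegrable (R P Q w v h x x') volume t T ∧
    W T P v h c t x' - W T P v h c t x - ⟪P t x, Q t x' - Q t x⟫_ℝ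
      = (-c x' + c x - ⟪P T x, x' - x⟫_ℝ) - ∫ s in t..T, R P Q w v h x x' s := by
  have hlip : ∀ s ∈ Icc 0 T, ∀ t ∈ Icc 0 T,
      |⟪P s x, Q s x' - Q s x⟫_ℝ - ⟪P t x, Q t x' - Q t x⟫_ℝ|
        ≤ (M * (M * M) + M * (2 * M)) * |s - t| := by
    intro s hs t ht
    have e : ⟪P s x, Q s x' - Q s x⟫_ℝ - ⟪P t x, Q t x' - Q t x⟫_ℝ
        = ⟪P s x - P t x, Q s x' - Q s x⟫_ℝ
          + ⟪P t x, (Q s x' - Q t x') - (Q s x - Q t x)⟫_ℝ := by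
      simp only [inner_sub_left, inner_sub_right]; ring
    have a1 := D.lipP s hs t ht x hx x hx
    have a2 := D.lipQ s hs s hs x' hx' x hx
    have a3 := D.lipQ s hs t ht x' hx' x' hx'
    have a4 := D.lipQ s hs t ht x hx x hx
    simp only [sub_self, norm_zero, add_zero, abs_zero, zero_add] at a1 a2 a3 a4
    have a5 : ‖(Q s x' - Q t x') - (Q s x - Q t x)‖ ≤ 2 * M * |s - t| :=
      (norm_sub_le _ _).trans (by linarith)
    have a6 : ‖Q s x' - Q s x‖ ≤ M * M :=
      a2.trans (mul_le_mul_of_nonneg_left (D.bdC _ hx' _ hx) D.hM)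
    have b1 := (abs_real_inner_le_norm (P s x - P t x) (Q s x' - Q s x)).trans
      (mul_le_mul a1 a6 (norm_nonneg _) (mul_nonneg D.hM (abs_nonneg _)))
    have b2 := (abs_real_inner_le_norm (P t x) ((Q s x' - Q t x') - (Q s x - Q t x))).trans
      (mul_le_mul (D.bdP t ht x hx) a5 (norm_nonneg _) D.hM)
    rw [e]
    refine (abs_add_le _ _).trans ((add_le_add b1 b2).trans (le_of_eq ?_))
    ring
  have hd : ∀ᵐ t, t ∈ Icc 0 T → HasDerivAt (fun s => ⟪P s x, Q s x' - Q s x⟫_ℝ)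
      (⟪P t x, v t x' - v t x⟫_ℝ + ⟪w t x, Q t x' - Q t x⟫_ℝ) t := by
    filter_upwards [D.derP x hx, D.derQ x hx, D.derQ x' hx'] with t h1 h2 h3 hm
    exact (h1 hm).inner ℝ ((h3 hm).sub (h2 hm))
  obtain ⟨i1, i2⟩ := aux_lip_ftc hlip hd ht D.T_mem
  have j1 := D.int_pv hx ht D.T_mem
  have j2 := D.int_pv hx' ht D.T_mem
  have j3 := D.int_h hx ht D.T_mem
  have j4 := D.int_h hx' ht D.T_mem
  have eR : R P Q w v h x x' = fun s => ((⟪P s x', v s x'⟫_ℝ - h s x')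
      - (⟪P s x, v s x⟫_ℝ - h s x))
      - (⟪P s x, v s x' - v s x⟫_ℝ + ⟪w s x, Q s x' - Q s x⟫_ℝ) := by
    funext s
    simp only [R, inner_sub_left, inner_sub_right]; ring
  rw [eR]
  refine ⟨((j2.sub j4).sub (j1.sub j3)).sub i1, ?_⟩
  rw [intervalIntegral.integral_sub ((j2.sub j4).sub (j1.sub j3)) i1, i2,
    intervalIntegral.integral_sub (j2.sub j4) (j1.sub j3)]
  simp only [W, D.termQ x hx, D.termQ x' hx']
  ring

lemma smallR (D : CoreData T M C P Q w v h c) {x : V} (hx : x ∈ C) {ε : ℝ} (hε : 0 < ε) :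
    ∀ᶠ x' in 𝓝[C] x, ∀ t ∈ Icc 0 T, |∫ s in t..T, R P Q w v h x x' s| ≤ ε * ‖x' - x‖ := by
  have h0 : (0:ℝ) ∈ Icc 0 T := ⟨le_rfl, D.hT.le⟩
  have key : Tendsto (fun x' => ∫ s in (0:ℝ)..T, |R P Q w v h x x' s| / ‖x' - x‖) (𝓝[C] x)
      (𝓝 (∫ s in (0:ℝ)..T, (0:ℝ))) := by
    apply intervalIntegral.tendsto_integral_filter_of_dominated_convergence
      (fun _ => 2 * M * M + M)
    · filter_upwards [self_mem_nhdsWithin] with x' hx'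
      have h1 := (D.ftcR hx hx' h0).1.def'.aestronglyMeasurable
      simp only [div_eq_mul_inv]
      exact h1.norm.mul_const _
    · filter_upwards [self_mem_nhdsWithin] with x' hx'
      filter_upwards [D.bdR] with t ht hmem
      rw [uIoc_of_le D.hT.le] at hmem
      have := ht ⟨hmem.1.le, hmem.2⟩ x hx x' hx'
      rw [Real.norm_eq_abs, abs_div, abs_abs, abs_norm]
      have hM := D.hM
      exact div_le_of_le_mul₀ (norm_nonneg _) (by positivity) this
    · exact intervalIntegrable_const
    · filter_upwards [D.small] with t ht hmem
      rw [uIoc_of_le D.hT.le] at hmem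
      have := (ht ⟨hmem.1.le, hmem.2⟩ x hx).norm_norm
      exact this.tendsto_div_nhds_zero
  rw [intervalIntegral.integral_zero] at key
  filter_upwards [key.eventually (gt_mem_nhds hε), self_mem_nhdsWithin] with x' h1 hx' t ht
  rcases eq_or_ne x' x with rfl | hne
  · simp [R]
  have hpos : 0 < ‖x' - x‖ := norm_pos_iff.2 (sub_ne_zero.2 hne)
  rw [intervalIntegral.integral_div, div_lt_iff₀ hpos] at h1
  refine le_trans ?_ h1.le
  refine (intervalIntegral.abs_integral_le_integral_abs ht.2).trans ?_
  have hi := (D.ftcR hx hx' h0).1.abs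
  exact intervalIntegral.integral_mono_interval ht.1 ht.2 le_rfl
    (Eventually.of_forall fun s => abs_nonneg _) hi

lemma lipWt (D : CoreData T M C P Q w v h c) {x : V} (hx : x ∈ C) {s t : ℝ}
    (hs : s ∈ Icc 0 T) (ht : t ∈ Icc 0 T) :
    W T P v h c t x - W T P v h c s x = ∫ r in s..t, (⟪P r x, v r x⟫_ℝ - h r x) := by
  have h1 := ((D.int_pv hx hs ht).sub (D.int_h hx hs ht))
  have h2 := ((D.int_pv hx ht D.T_mem).sub (D.int_h hx ht D.T_mem))
  have := intervalIntegral.integral_add_adjacent_intervals h1 h2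
  simp only [W]
  linarith

lemma lipWx (D : CoreData T M C P Q w v h c) {x x' : V} (hx : x ∈ C) (hx' : x' ∈ C) {t : ℝ}
    (ht : t ∈ Icc 0 T) :
    |W T P v h c t x' - W T P v h c t x| ≤
      (M * M + M + M + (2 * M * M + M) * T) * ‖x' - x‖ := by
  have h1 := (D.ftcR hx hx' ht).2
  have h2 : |∫ s in t..T, R P Q w v h x x' s| ≤ (2 * M * M + M) * ‖x' - x‖ * |T - t| := by
    rw [← Real.norm_eq_abs]
    apply intervalIntegral.norm_integral_le_of_norm_le_const_ae
    filter_upwards [D.bdR] with r hr hmem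
    rw [uIoc_of_le ht.2] at hmem
    exact hr ⟨ht.1.trans hmem.1.le, hmem.2⟩ x hx x' hx'
  have hTt : |T - t| ≤ T := by
    rw [abs_of_nonneg (sub_nonneg.2 ht.2)]; linarith [ht.1]
  have hM := D.hM
  have h2' : |∫ s in t..T, R P Q w v h x x' s| ≤ (2 * M * M + M) * ‖x' - x‖ * T :=
    h2.trans (by gcongr)
  have h3 := D.lipc x hx x' hx'
  have h4 : |⟪P T x, x' - x⟫_ℝ| ≤ M * ‖x' - x‖ := (abs_real_inner_le_norm _ _).trans
    (mul_le_mul_of_nonneg_right (D.bdP T D.T_mem x hx) (norm_nonneg _))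
  have h5 : |⟪P t x, Q t x' - Q t x⟫_ℝ| ≤ M * (M * ‖x' - x‖) := by
    refine (abs_real_inner_le_norm _ _).trans ?_
    have := D.lipQ t ht t ht x' hx' x hx
    simp only [sub_self, abs_zero, zero_add] at this
    exact mul_le_mul (D.bdP t ht x hx) this (norm_nonneg _) D.hM
  rw [abs_le] at *
  constructor <;> nlinarith

lemma main_ineq (D : CoreData T M C P Q w v h c) {K : ℝ} (hK : 0 ≤ K) {y η : ℝ → V}
    (hyC : ∀ t ∈ Icc 0 T, y t ∈ C)
    (hy : ∀ t ∈ Icc 0 T, ∀ s ∈ Icc 0 T, ‖y t - y s‖ ≤ K * |t - s|)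
    (hη : ∀ t ∈ Icc 0 T, η t = Q t (y t))
    (hmeas : AEStronglyMeasurable (fun t => h t (y t)) (volume.restrict (Icc 0 T)))
    (hmax : ∀ᵐ t, t ∈ Ioo 0 T → ∃ u, HasDerivAt η u t ∧ ⟪P t (y t), u⟫_ℝ ≤ h t (y t)) :
    -c (y T) ≤ W T P v h c 0 (y 0) := by
  have hM := D.hM
  have hT := D.hT
  have h0 : (0:ℝ) ∈ Icc 0 T := ⟨le_rfl, D.hT.le⟩
  have hWT : W T P v h c T (y T) = -c (y T) := by simp [W]
  rw [← hWT]
  have hint : IntegrableOn (fun s => h s (y s)) (Icc 0 T) := by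
    refine Integrable.of_bound hmeas M ?_
    rw [ae_restrict_iff' measurableSet_Icc]
    filter_upwards [D.bd] with t ht hmem using (ht hmem _ (hyC t hmem)).2.2
  have hintab : ∀ a ∈ Icc 0 T, ∀ b ∈ Icc 0 T,
      IntervalIntegrable (fun s => h s (y s)) volume a b := fun a ha b hb =>
    (hint.mono_set (ordConnected_Icc.uIcc_subset ha hb)).intervalIntegrable
  apply aux_lip_mono (f := fun t => W T P v h c t (y t)) hT
    (M := (M * M + M + M + (2 * M * M + M) * T) * K + (M * M + M))
  · intro s hs t ht
    have e1 := D.lipWx (hyC t ht) (hyC s hs) hs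
    have e2 := D.lipWt (hyC t ht) ht hs
    have e3 : |∫ r in t..s, (⟪P r (y t), v r (y t)⟫_ℝ - h r (y t))| ≤ (M * M + M) * |s - t| := by
      rw [← Real.norm_eq_abs]
      apply intervalIntegral.norm_integral_le_of_norm_le_const_ae
      filter_upwards [D.bd] with r hr hmem
      have hr' : r ∈ Icc 0 T := ordConnected_Icc.uIcc_subset ht hs (uIoc_subset_uIcc hmem)
      obtain ⟨_, b2, b3⟩ := hr hr' _ (hyC t ht)
      refine (norm_sub_le _ _).trans (add_le_add ?_ b3)
      exact (norm_inner_le_norm _ _).trans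
        (mul_le_mul (D.bdP r hr' _ (hyC t ht)) b2 (norm_nonneg _) hM)
    rw [← e2] at e3
    have e4 : (M * M + M + M + (2 * M * M + M) * T) * ‖y s - y t‖ ≤
        (M * M + M + M + (2 * M * M + M) * T) * (K * |s - t|) := by
      have := hy s hs t ht
      gcongr
    have e5 := abs_add_le (W T P v h c s (y s) - W T P v h c s (y t))
      (W T P v h c s (y t) - W T P v h c t (y t))
    rw [sub_add_sub_cancel] at e5
    nlinarith
  · have hLeb := (hintab 0 h0 T D.T_mem).ae_hasDerivAt_integral
    filter_upwards [hmax, hLeb] with t hmax hLeb htI d hd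
    obtain ⟨u, hu, hule⟩ := hmax htI
    have ht : t ∈ Icc 0 T := Ioo_subset_Icc_self htI
    have hL := hLeb (by rw [uIcc_of_le hT.le]; exact ht) 0 (by rw [uIcc_of_le hT.le]; exact h0)
    set x := y t with hxdef
    have hx : x ∈ C := hyC t ht
    have hΨ := (hd.sub ((hasDerivAt_const t (P t x)).inner ℝ hu)).add hL
    set Ψ : ℝ → ℝ := ((fun t => W T P v h c t (y t)) - fun r => ⟪P t x, η r⟫_ℝ)
      + fun r => ∫ s in (0:ℝ)..r, h s (y s) with hΨdef
    set B : ℝ := M * (1 + K) * M + M * K with hB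
    have hBnn : 0 ≤ B := by positivity
    have hest : ∀ r ∈ Icc 0 T, |Ψ r - Ψ t| ≤ B * |r - t| * |r - t|
        + |(-c (y r) + c x - ⟪P T x, y r - x⟫_ℝ)|
        + |∫ s in t..T, R P Q w v h x (y r) s| := by
      intro r hr
      set x' := y r with hx'def
      have hx' : x' ∈ C := hyC r hr
      have f1 := (D.ftcR hx hx' ht).2
      have f2 := D.lipWt hx' ht hr
      have f3 : IntervalIntegrable (fun s => ⟪P t x, v s x'⟫_ℝ) volume t r ∧
          ∫ s in t..r, ⟪P t x, v s x'⟫_ℝ = ⟪P t x, Q r x'⟫_ℝ - ⟪P t x, Q t x'⟫_ℝ := by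
        apply aux_lip_ftc (f := fun s => ⟪P t x, Q s x'⟫_ℝ) (M := M * M) (T := T) _ _ ht hr
        · intro a ha b hb
          rw [← inner_sub_right]
          have := D.lipQ a ha b hb x' hx' x' hx'
          simp only [sub_self, norm_zero, add_zero] at this
          refine (abs_real_inner_le_norm _ _).trans ?_
          rw [mul_assoc]
          exact mul_le_mul (D.bdP t ht x hx) this (norm_nonneg _) hM
        · filter_upwards [D.derQ x' hx'] with s hs hmem
          simpa using (hasDerivAt_const s (P t x)).inner ℝ (hs hmem)
      have f4 := intervalIntegral.integral_interval_sub_left (hintab 0 h0 r hr) (hintab 0 h0 t ht)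
      have g1 := D.int_pv hx' ht hr
      have g2 := D.int_h hx' ht hr
      have g3 := hintab t ht r hr
      have f5 : ∫ s in t..r, ((⟪P s x', v s x'⟫_ℝ - h s x') - ⟪P t x, v s x'⟫_ℝ + h s (y s))
          = (∫ s in t..r, (⟪P s x', v s x'⟫_ℝ - h s x')) - (∫ s in t..r, ⟪P t x, v s x'⟫_ℝ)
            + ∫ s in t..r, h s (y s) := by
        rw [intervalIntegral.integral_add ((g1.sub g2).sub f3.1) g3,
          intervalIntegral.integral_sub (g1.sub g2) f3.1]
      have f6 : |∫ s in t..r, ((⟪P s x', v s x'⟫_ℝ - h s x') - ⟪P t x, v s x'⟫_ℝ + h s (y s))|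
          ≤ B * |r - t| * |r - t| := by
        rw [← Real.norm_eq_abs]
        apply intervalIntegral.norm_integral_le_of_norm_le_const_ae
        filter_upwards [D.bd, D.lipH] with s hs hs2 hmem
        have hsu := uIoc_subset_uIcc hmem
        have hs' : s ∈ Icc 0 T := ordConnected_Icc.uIcc_subset ht hr hsu
        have k1 : |s - t| ≤ |r - t| := abs_sub_left_of_mem_uIcc hsu
        have k2 : |s - r| ≤ |r - t| := by
          rw [abs_sub_comm s r]; exact abs_sub_right_of_mem_uIcc hsu
        have k3 : ‖P s x' - P t x‖ ≤ M * (1 + K) * |r - t| := by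
          refine (D.lipP s hs' t ht x' hx' x hx).trans ?_
          rw [mul_assoc]
          refine mul_le_mul_of_nonneg_left ?_ hM
          have := hy r hr t ht
          linarith
        have k4 : |h s (y s) - h s x'| ≤ M * (K * |r - t|) := by
          refine (hs2 hs' x' hx' _ (hyC s hs')).trans (mul_le_mul_of_nonneg_left ?_ hM)
          exact (hy s hs' r hr).trans (mul_le_mul_of_nonneg_left k2 hK)
        have k5 : |⟪P s x' - P t x, v s x'⟫_ℝ| ≤ M * (1 + K) * |r - t| * M :=
          (abs_real_inner_le_norm _ _).trans
            (mul_le_mul k3 (hs hs' x' hx').2.1 (norm_nonneg _) (by positivity))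
        have k6 : (⟪P s x', v s x'⟫_ℝ - h s x') - ⟪P t x, v s x'⟫_ℝ + h s (y s)
            = ⟪P s x' - P t x, v s x'⟫_ℝ + (h s (y s) - h s x') := by
          rw [inner_sub_left]; ring
        rw [k6, Real.norm_eq_abs]
        refine (abs_add_le _ _).trans ((add_le_add k5 k4).trans (le_of_eq ?_))
        rw [hB]; ring
      have f7 : Ψ r - Ψ t =
          (∫ s in t..r, ((⟪P s x', v s x'⟫_ℝ - h s x') - ⟪P t x, v s x'⟫_ℝ + h s (y s)))
          + (-c x' + c x - ⟪P T x, x' - x⟫_ℝ) - ∫ s in t..T, R P Q w v h x x' s := by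
        rw [f5, ← f2, f3.2, ← f4]
        simp only [hΨdef, Pi.add_apply, Pi.sub_apply, hη r hr, hη t ht, ← hxdef, ← hx'def]
        rw [inner_sub_right] at f1
        linarith
      rw [f7]
      refine (abs_sub _ _).trans ?_
      have := abs_add_le (∫ s in t..r,
        ((⟪P s x', v s x'⟫_ℝ - h s x') - ⟪P t x, v s x'⟫_ℝ + h s (y s)))
        (-c x' + c x - ⟪P T x, x' - x⟫_ℝ)
      linarith
    have hΨ0 : HasDerivAt Ψ 0 t := by
      rw [hasDerivAt_iff_isLittleO, Asymptotics.isLittleO_iff]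
      intro ε hε
      have hIcc : Icc 0 T ∈ 𝓝 t := Icc_mem_nhds htI.1 htI.2
      have hyt : Tendsto y (𝓝 t) (𝓝[C] x) := by
        apply tendsto_nhdsWithin_of_tendsto_nhds_of_eventually_within
        · rw [tendsto_iff_norm_sub_tendsto_zero]
          have h1 : Tendsto (fun r => K * |r - t|) (𝓝 t) (𝓝 0) := by
            have : Continuous (fun r => K * |r - t|) := by fun_prop
            simpa using this.tendsto t
          refine squeeze_zero' (Eventually.of_forall fun _ => norm_nonneg _) ?_ h1
          filter_upwards [hIcc] with r hr using hy r hr t ht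
        · filter_upwards [hIcc] with r hr using hyC r hr
      have hε1 : 0 < ε / (4 * (K + 1)) := by positivity
      have a1 := hyt.eventually (D.smallR hx hε1)
      have a2 := hyt.eventually ((D.term x hx).bound hε1)
      have a3 : ∀ᶠ r in 𝓝 t, |r - t| < ε / (2 * (B + 1)) :=
        Metric.ball_mem_nhds t (by positivity)
      filter_upwards [a1, a2, a3, hIcc] with r b1 b2 b3 hr
      have b1 := b1 t ht
      rw [Real.norm_eq_abs] at b2
      have b4 := hest r hr
      have b5 : ε / (4 * (K + 1)) * ‖y r - x‖ ≤ ε / 4 * |r - t| := by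
        have := hy r hr t ht
        calc ε / (4 * (K + 1)) * ‖y r - x‖ ≤ ε / (4 * (K + 1)) * ((K + 1) * |r - t|) := by
              refine mul_le_mul_of_nonneg_left ?_ hε1.le
              have := abs_nonneg (r - t)
              linarith
          _ = ε / 4 * |r - t| := by field_simp
      have b6 : B * |r - t| * |r - t| ≤ ε / 2 * |r - t| := by
        refine mul_le_mul_of_nonneg_right ?_ (abs_nonneg _)
        calc B * |r - t| ≤ (B + 1) * (ε / (2 * (B + 1))) := by
              apply mul_le_mul (by linarith) b3.le (abs_nonneg _) (by positivity)
          _ = ε / 2 := by field_simp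
      simp only [smul_zero, sub_zero, Real.norm_eq_abs]
      linarith
    have huniq := hΨ.unique hΨ0
    simp only [inner_zero_left, add_zero] at huniq
    linarith

end CoreData
end OvermaxHelpers

section OvermaxHelpers2

open Filter Topology Asymptotics

variable {n : ℕ}

lemma gradient_snd {H : E n × E n → ℝ} {ℓ : E n × E n} (hd : DifferentiableAt ℝ H ℓ) :
    gradient (fun x => H (ℓ.1, x)) ℓ.2 = (InnerProductSpace.toDual ℝ (E n)).symm
      ((fderiv ℝ H ℓ).comp (ContinuousLinearMap.inr ℝ (E n) (E n))) := by
  have h1 : HasFDerivAt (fun x => H (ℓ.1, x))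
      ((fderiv ℝ H ℓ).comp (ContinuousLinearMap.inr ℝ (E n) (E n))) ℓ.2 :=
    HasFDerivAt.comp ℓ.2 (g := H) (f := fun x => (ℓ.1, x)) (by simpa using hd.hasFDerivAt)
      (hasFDerivAt_prodMk_right ℓ.1 ℓ.2)
  rw [gradient, h1.fderiv]

lemma gradient_fst {H : E n × E n → ℝ} {ℓ : E n × E n} (hd : DifferentiableAt ℝ H ℓ) :
    gradient (fun p => H (p, ℓ.2)) ℓ.1 = (InnerProductSpace.toDual ℝ (E n)).symm
      ((fderiv ℝ H ℓ).comp (ContinuousLinearMap.inl ℝ (E n) (E n))) := by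
  have h1 : HasFDerivAt (fun p => H (p, ℓ.2))
      ((fderiv ℝ H ℓ).comp (ContinuousLinearMap.inl ℝ (E n) (E n))) ℓ.1 :=
    HasFDerivAt.comp ℓ.1 (g := H) (f := fun p => (p, ℓ.2)) (by simpa using hd.hasFDerivAt)
      (hasFDerivAt_prodMk_left ℓ.1 ℓ.2)
  rw [gradient, h1.fderiv]

lemma hamVF_inner {H : E n × E n → ℝ} {ℓ : E n × E n} (hd : DifferentiableAt ℝ H ℓ)
    (d : E n × E n) :
    fderiv ℝ H ℓ d = ⟪(hamVF H ℓ).2, d.1⟫_ℝ - ⟪(hamVF H ℓ).1, d.2⟫_ℝ := by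
  simp only [hamVF, gradient_fst hd, gradient_snd hd, inner_neg_left,
    InnerProductSpace.toDual_symm_apply, ContinuousLinearMap.comp_apply,
    ContinuousLinearMap.inl_apply, ContinuousLinearMap.inr_apply, sub_neg_eq_add]
  rw [← map_add]
  simp

lemma hamVF_contOn {H : E n × E n → ℝ} {Ω : Set (E n × E n)} (hΩ : IsOpen Ω)
    (hH : ContDiffOn ℝ 1 H Ω) : ContinuousOn (hamVF H) Ω := by
  have h1 : ContinuousOn (fderiv ℝ H) Ω := hH.continuousOn_fderiv_of_isOpen hΩ le_rfl
  have h2 : ContinuousOn (fun ℓ => (-(InnerProductSpace.toDual ℝ (E n)).symm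
      ((fderiv ℝ H ℓ).comp (ContinuousLinearMap.inr ℝ (E n) (E n))),
      (InnerProductSpace.toDual ℝ (E n)).symm
      ((fderiv ℝ H ℓ).comp (ContinuousLinearMap.inl ℝ (E n) (E n))))) Ω := by
    refine ContinuousOn.prodMk (ContinuousOn.neg ?_) ?_
    · exact (InnerProductSpace.toDual ℝ (E n)).symm.continuous.comp_continuousOn
        (h1.clm_comp continuousOn_const)
    · exact (InnerProductSpace.toDual ℝ (E n)).symm.continuous.comp_continuousOn
        (h1.clm_comp continuousOn_const)
  refine h2.congr fun ℓ hℓ => ?_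
  have hd : DifferentiableAt ℝ H ℓ :=
    (hH.contDiffAt (hΩ.mem_nhds hℓ)).differentiableAt one_ne_zero
  simp only [hamVF, gradient_fst hd, gradient_snd hd]

lemma fderiv_le_hamVF {H : E n × E n → ℝ} {ℓ : E n × E n} (hd : DifferentiableAt ℝ H ℓ)
    (d : E n × E n) : |fderiv ℝ H ℓ d| ≤ 2 * ‖hamVF H ℓ‖ * ‖d‖ := by
  rw [hamVF_inner hd]
  have h1 := (abs_real_inner_le_norm (hamVF H ℓ).2 d.1).trans
    (mul_le_mul (norm_snd_le _) (norm_fst_le _) (norm_nonneg _) (norm_nonneg _))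
  have h2 := (abs_real_inner_le_norm (hamVF H ℓ).1 d.2).trans
    (mul_le_mul (norm_fst_le _) (norm_snd_le _) (norm_nonneg _) (norm_nonneg _))
  refine (abs_sub _ _).trans ?_
  linarith

lemma aux_A_tendsto {C : Set (E n)} {a : E n → E n × E n} {M : ℝ}
    (ha : ∀ x ∈ C, ∀ x' ∈ C, ‖a x' - a x‖ ≤ M * ‖x' - x‖) {x : E n} (hx : x ∈ C) :
    (fun x' => a x' - a x) =O[𝓝[C] x] (fun x' => x' - x) ∧
      Tendsto a (𝓝[C] x) (𝓝 (a x)) := by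
  have h1 : (fun x' => a x' - a x) =O[𝓝[C] x] (fun x' => x' - x) := by
    apply IsBigO.of_bound M
    filter_upwards [self_mem_nhdsWithin] with x' hx' using ha x hx x' hx'
  refine ⟨h1, ?_⟩
  have h2 : Tendsto (fun x' => x' - x) (𝓝[C] x) (𝓝 0) := by
    have : Continuous (fun x' : E n => x' - x) := by fun_prop
    simpa using (this.tendsto x).mono_left (nhdsWithin_le_nhds (s := C))
  exact tendsto_sub_nhds_zero_iff.1 (h1.trans_tendsto h2)

lemma aux_small {H : E n × E n → ℝ} {Ω : Set (E n × E n)} (hΩ : IsOpen Ω)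
    (hH : ContDiffOn ℝ 1 H Ω) {C : Set (E n)} {a : E n → E n × E n} {M : ℝ}
    (ha : ∀ x ∈ C, ∀ x' ∈ C, ‖a x' - a x‖ ≤ M * ‖x' - x‖) (haΩ : ∀ x ∈ C, a x ∈ Ω)
    {x : E n} (hx : x ∈ C) :
    (fun x' => ⟪(a x').1 - (a x).1, (hamVF H (a x')).2⟫_ℝ
      - ⟪(hamVF H (a x)).1, (a x').2 - (a x).2⟫_ℝ - (H (a x') - H (a x)))
      =o[𝓝[C] x] (fun x' => x' - x) := by
  obtain ⟨hO, ht⟩ := aux_A_tendsto ha hx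
  have hd : DifferentiableAt ℝ H (a x) :=
    (hH.contDiffAt (hΩ.mem_nhds (haΩ x hx))).differentiableAt one_ne_zero
  have h1 : (fun x' => H (a x') - H (a x) - fderiv ℝ H (a x) (a x' - a x))
      =o[𝓝[C] x] (fun x' => x' - x) :=
    (hd.hasFDerivAt.isLittleO.comp_tendsto ht).trans_isBigO hO
  have h2 : (fun x' => ⟪(a x').1 - (a x).1, (hamVF H (a x')).2 - (hamVF H (a x)).2⟫_ℝ)
      =o[𝓝[C] x] (fun x' => x' - x) := by
    have k1 : (fun x' => ‖a x' - a x‖) =O[𝓝[C] x] (fun x' => ‖x' - x‖) := hO.norm_norm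
    have k2 : Tendsto (fun x' => hamVF H (a x')) (𝓝[C] x) (𝓝 (hamVF H (a x))) :=
      ((hamVF_contOn hΩ hH).continuousAt (hΩ.mem_nhds (haΩ x hx))).tendsto.comp ht
    have k3 : (fun x' => ‖hamVF H (a x') - hamVF H (a x)‖) =o[𝓝[C] x] (fun _ => (1:ℝ)) := by
      rw [isLittleO_one_iff]
      exact tendsto_iff_norm_sub_tendsto_zero.1 k2
    have k4 := k1.mul_isLittleO k3
    simp only [mul_one] at k4
    refine IsLittleO.of_norm_right ?_
    refine (IsBigO.of_bound 1 (Eventually.of_forall fun x' => ?_)).trans_isLittleO k4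
    rw [one_mul, norm_mul, norm_norm, norm_norm]
    exact (norm_inner_le_norm _ _).trans
      (mul_le_mul (norm_fst_le (a x' - a x)) (norm_snd_le (hamVF H (a x') - hamVF H (a x)))
        (norm_nonneg _) (norm_nonneg _))
  refine (h2.sub h1).congr_left fun x' => ?_
  rw [hamVF_inner hd]
  simp only [inner_sub_right, inner_sub_left, Prod.fst_sub, Prod.snd_sub]
  rw [real_inner_comm (hamVF H (a x)).2 (a x').1, real_inner_comm (hamVF H (a x)).2 (a x).1]
  ring

lemma aux_lipH {H : E n × E n → ℝ} {Ω : Set (E n × E n)} (hΩ : IsOpen Ω)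
    (hH : ContDiffOn ℝ 1 H Ω) {C : Set (E n)} (hC : Convex ℝ C) {a : E n → E n × E n} {M K : ℝ}
    (ha : ∀ x ∈ C, ∀ x' ∈ C, ‖a x' - a x‖ ≤ M * ‖x' - x‖) (haΩ : ∀ x ∈ C, a x ∈ Ω)
    (hK : 0 ≤ K) (hb : ∀ x ∈ C, ‖hamVF H (a x)‖ ≤ K) {x x' : E n} (hx : x ∈ C) (hx' : x' ∈ C) :
    |H (a x') - H (a x)| ≤ (2 * K + 1) * M * ‖x' - x‖ := by
  have key : ∀ x ∈ C, ∀ᶠ x' in 𝓝[C] x,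
      |H (a x') - H (a x)| ≤ (2 * K + 1) * M * ‖x' - x‖ := by
    intro x hx
    obtain ⟨hO, ht⟩ := aux_A_tendsto ha hx
    have hd : DifferentiableAt ℝ H (a x) :=
      (hH.contDiffAt (hΩ.mem_nhds (haΩ x hx))).differentiableAt one_ne_zero
    have h1 := ht.eventually (hd.hasFDerivAt.isLittleO.bound (zero_lt_one))
    filter_upwards [h1, self_mem_nhdsWithin] with x' h2 hx'
    have h3 := fderiv_le_hamVF hd (a x' - a x)
    have h4 : 2 * ‖hamVF H (a x)‖ * ‖a x' - a x‖ ≤ 2 * K * ‖a x' - a x‖ := by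
      have := hb x hx
      gcongr
    have h5 : (2 * K + 1) * ‖a x' - a x‖ ≤ (2 * K + 1) * (M * ‖x' - x‖) :=
      mul_le_mul_of_nonneg_left (ha x hx x' hx') (by linarith)
    rw [Real.norm_eq_abs] at h2
    have h6 := abs_add_le (H (a x') - H (a x) - fderiv ℝ H (a x) (a x' - a x))
      (fderiv ℝ H (a x) (a x' - a x))
    rw [sub_add_cancel] at h6
    linarith
  rw [abs_le]
  have e1 := aux_convex_local_lip hC (f := fun x => H (a x)) key hx hx'
  have e2 := aux_convex_local_lip hC (f := fun x => H (a x)) key hx' hx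
  rw [norm_sub_rev] at e2
  constructor <;> linarith

lemma aux_meas {H : ℝ → (E n × E n) → ℝ} {Ω : Set (E n × E n)} {T : ℝ}
    (hHmeas : ∀ ℓ ∈ Ω, Measurable (fun t : ℝ => H t ℓ))
    (hHC1 : ∀ t ∈ Icc 0 T, ContDiffOn ℝ 1 (H t) Ω)
    {γ : ℝ → E n × E n} (hγ : ContinuousOn γ (Icc 0 T)) (hγΩ : ∀ t ∈ Icc 0 T, γ t ∈ Ω) :
    AEStronglyMeasurable (fun t => H t (γ t)) (volume.restrict (Icc 0 T)) := by
  have h1 : Measurable (Function.uncurry (fun (ℓ : Ω) (t : Icc (0:ℝ) T) => H t ℓ)) := by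
    apply measurable_uncurry_of_continuous_of_measurable
    · intro t
      exact (hHC1 t t.2).continuousOn.domRestrict
    · intro ℓ
      exact (hHmeas ℓ ℓ.2).comp measurable_subtype_coe
  have h2 : Measurable (fun t : Icc (0:ℝ) T => ((⟨γ t, hγΩ t t.2⟩ : Ω), t)) := by
    apply Measurable.prodMk _ measurable_id
    apply Measurable.subtype_mk
    exact hγ.domRestrict.measurable
  have h3 := h1.comp h2
  exact (aemeasurable_restrict_of_measurable_subtype (f := fun t => H t (γ t))
    measurableSet_Icc h3).aestronglyMeasurable

lemma aux_ae_bound {T : ℝ} {O : Set (E n)} {H : ℝ → (E n × E n) → ℝ} {Ω : Set (E n × E n)}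
    (hΩ : IsOpen Ω) (hHC1 : ∀ t ∈ Icc 0 T, ContDiffOn ℝ 1 (H t) Ω)
    {A : ℝ → E n → E n × E n} (hAΩ : ∀ x ∈ O, ∀ t ∈ Icc 0 T, A t x ∈ Ω)
    (hAc : ∀ t ∈ Icc 0 T, ContinuousOn (A t) O) {K : ℝ≥0}
    (hAt : ∀ x ∈ O, LipschitzOnWith K (fun t => A t x) (Icc 0 T))
    (hd : ∀ x ∈ O, ∀ᵐ t, t ∈ Icc 0 T → HasDerivAt (fun s => A s x) (hamVF (H t) (A t x)) t) :
    ∀ᵐ t, t ∈ Icc 0 T → ∀ x ∈ O, ‖hamVF (H t) (A t x)‖ ≤ K := by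
  obtain ⟨S, hSc, hSd⟩ := TopologicalSpace.exists_countable_dense O
  have h1 : ∀ᵐ t, ∀ x ∈ S, t ∈ Icc 0 T →
      HasDerivAt (fun s => A s x) (hamVF (H t) (A t x)) t := by
    rw [ae_ball_iff hSc]
    exact fun x _ => hd x x.2
  have ha0 : ∀ᵐ t : ℝ, t ≠ 0 := by simp [ae_iff, measure_singleton]
  have haT : ∀ᵐ t : ℝ, t ≠ T := by simp [ae_iff, measure_singleton]
  filter_upwards [h1, ha0, haT] with t h1 h0 hT ht
  have htI : Icc 0 T ∈ 𝓝 t :=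
    Icc_mem_nhds (lt_of_le_of_ne ht.1 (Ne.symm h0)) (lt_of_le_of_ne ht.2 hT)
  have hcont : Continuous (fun x : O => ‖hamVF (H t) (A t x)‖) := by
    have : ContinuousOn (fun x => hamVF (H t) (A t x)) O :=
      (hamVF_contOn hΩ (hHC1 t ht)).comp (hAc t ht) (fun x hx => hAΩ x hx t ht)
    exact this.domRestrict.norm
  have hb : ∀ x ∈ S, ‖hamVF (H t) (A t x)‖ ≤ (K : ℝ) := by
    intro x hx
    have hlip := hAt x.1 x.2
    have hder := h1 x hx ht
    exact HasDerivAt.le_of_lipschitzOn hder htI hlip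
  have hall : ∀ z : O, ‖hamVF (H t) (A t z)‖ ≤ (K : ℝ) := by
    intro z
    have hmem : z ∈ closure S := hSd z
    have hcl : IsClosed {x : O | ‖hamVF (H t) (A t x)‖ ≤ (K : ℝ)} :=
      isClosed_le hcont continuous_const
    have h2 : closure S ⊆ {x : O | ‖hamVF (H t) (A t x)‖ ≤ (K : ℝ)} := closure_minimal hb hcl
    exact h2 hmem
  intro x hx
  exact hall ⟨x, hx⟩

end OvermaxHelpers2

/-- **Theorem 4.1** (optimality assertion): if the projected overmaximised flow emanating
from the horizontal Lagrangian submanifold `Λ` is a homeomorphism onto a neighborhood `U`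
of the graph of `ξ̂` with locally Lipschitz inverse, then every admissible trajectory with
graph in `U` has modified cost not smaller than that of `ξ̂`. -/
theorem overmaximised_flow_gives_local_optimality
    {n m : ℕ} (X : Fin m → (E n → E n)) (hX : ∀ i, ContDiff ℝ (⊤ : ℕ∞) (X i))
    (x₀ : E n) (T : ℝ) (hT : 0 < T)
    (ξ : ℝ → E n) (hξadm : Admissible X x₀ T ξ)
    (xf : E n) (hxf : xf = ξ T)
    -- the modified cost and the Lagrangian submanifold Λ
    (O : Set (E n)) (hO : IsOpen O) (hOconv : Convex ℝ O) (hxfO : xf ∈ O)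
    (c' : E n → ℝ) (hc'sm : ContDiffOn ℝ (⊤ : ℕ∞) c' O)
    -- the overmaximised Hamiltonian
    (Ω : Set (E n × E n)) (hΩ : IsOpen Ω)
    (H : ℝ → (E n × E n) → ℝ)
    (hHmeas : ∀ ℓ ∈ Ω, Measurable (fun t : ℝ => H t ℓ))
    (hHC1 : ∀ t ∈ Icc 0 T, ContDiffOn ℝ 1 (H t) Ω)
    (hHmax : ∀ t ∈ Icc 0 T, ∀ ℓ ∈ Ω, ∀ v ∈ chull X ℓ.2, ⟪ℓ.1, v⟫_ℝ ≤ H t ℓ)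
    -- the overmaximised flow 𝓗, from time T backwards in time
    (𝓗 : ℝ → (E n × E n) → E n × E n)
    (hflowLip : ∃ K : ℝ≥0, LipschitzOnWith K (fun q : ℝ × (E n × E n) => 𝓗 q.1 q.2)
      (Icc 0 T ×ˢ ((fun x => (-gradient c' x, x)) '' O)))
    (hflowT : ∀ x ∈ O, 𝓗 T (-gradient c' x, x) = (-gradient c' x, x))
    (hflowIn : ∀ x ∈ O, ∀ t ∈ Icc 0 T, 𝓗 t (-gradient c' x, x) ∈ Ω)
    (hflowODE : ∀ x ∈ O, ∀ᵐ t, t ∈ Icc 0 T →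
      HasDerivAt (fun s => 𝓗 s (-gradient c' x, x))
        (hamVF (H t) (𝓗 t (-gradient c' x, x))) t)
    -- behaviour along the reference extremal λ̂(t) = 𝓗_t(ℓ̂_f)
    (hproj : ∀ t ∈ Icc 0 T, (𝓗 t (-gradient c' xf, xf)).2 = ξ t)
    (hrefmax : ∀ᵐ t, t ∈ Ioo 0 T → ∃ v ∈ chull X (ξ t), HasDerivAt ξ v t ∧
      H t (𝓗 t (-gradient c' xf, xf)) = ⟪(𝓗 t (-gradient c' xf, xf)).1, v⟫_ℝ)
    -- invertibility of the projected flow id × π𝓗 onto a neighborhood U of the graph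
    (U : Set (ℝ × E n)) (V : Set (ℝ × E n)) (hV : IsOpen V)
    (hUV : U = V ∩ (Icc 0 T ×ˢ univ))
    (hUgraph : ∀ t ∈ Icc 0 T, (t, ξ t) ∈ U)
    (hbij : Set.BijOn (fun q : ℝ × (E n × E n) => (q.1, (𝓗 q.1 q.2).2))
      (Icc 0 T ×ˢ ((fun x => (-gradient c' x, x)) '' O)) U)
    (Φ : ℝ × E n → ℝ × (E n × E n))
    (hΦinv : Set.InvOn Φ (fun q : ℝ × (E n × E n) => (q.1, (𝓗 q.1 q.2).2))
      (Icc 0 T ×ˢ ((fun x => (-gradient c' x, x)) '' O)) U)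
    (hΦlip : ∀ y ∈ U, ∃ K : ℝ≥0, ∃ W ∈ nhdsWithin y U, LipschitzOnWith K Φ W) :
    -- conclusion: ξ̂ minimizes the modified cost among admissible trajectories in U
    ∀ η : ℝ → E n, Admissible X x₀ T η → (∀ t ∈ Icc 0 T, (t, η t) ∈ U) →
      c' (ξ T) ≤ c' (η T) := by
  intro η hηadm hηU
  obtain ⟨⟨Kξ, hξlip⟩, hξ0, hξae⟩ := hξadm
  obtain ⟨⟨Kη, hηlip⟩, hη0, hηae⟩ := hηadm
  obtain ⟨K0, hK0⟩ := hflowLip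
  set g : E n → E n × E n := fun x => (-gradient c' x, x) with hg
  set A : ℝ → E n → E n × E n := fun t x => 𝓗 t (g x) with hA
  have h0I : (0:ℝ) ∈ Icc 0 T := ⟨le_rfl, hT.le⟩
  have hTI : T ∈ Icc 0 T := ⟨hT.le, le_rfl⟩
  -- pulling the competitor back
  set y : ℝ → E n := fun t => (Φ (t, η t)).2.2 with hy
  have hyspec : ∀ t ∈ Icc 0 T, y t ∈ O ∧ (A t (y t)).2 = η t := by
    intro t ht
    obtain ⟨q, ⟨hq1, z, hz, hzq⟩, hqe⟩ := hbij.surjOn (hηU t ht)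
    have h1 : Φ (t, η t) = q := by
      rw [← hqe]; exact hΦinv.1 ⟨hq1, z, hz, hzq⟩
    have h2 : q.1 = t := congrArg Prod.fst hqe
    have h3 : (𝓗 q.1 q.2).2 = η t := congrArg Prod.snd hqe
    have h4 : y t = z := by
      simp only [hy, h1, ← hzq, hg]
    rw [h4]
    refine ⟨hz, ?_⟩
    rw [← h3, h2, ← hzq]
  have hy0 : y 0 = xf := by
    have hinj := hbij.injOn
    have h1 := @hinj ((0:ℝ), g (y 0))
      ⟨h0I, _, (hyspec 0 h0I).1, rfl⟩ ((0:ℝ), g xf) ⟨h0I, _, hxfO, rfl⟩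
      (by
        have e1 := (hyspec 0 h0I).2
        have e2 := hproj 0 h0I
        simp only [hA] at e1
        change ((0:ℝ), (𝓗 0 (g (y 0))).2) = ((0:ℝ), (𝓗 0 (g xf)).2)
        rw [e1]
        change _ = ((0:ℝ), (𝓗 0 (-gradient c' xf, xf)).2)
        rw [e2, hη0, hξ0])
    have h2 : (g (y 0)).2 = (g xf).2 := congrArg (fun q : ℝ × (E n × E n) => q.2.2) h1
    exact h2
  obtain ⟨Ky, hKy⟩ : ∃ K : ℝ≥0, LipschitzOnWith K y (Icc 0 T) := by
    have hgr : LipschitzOnWith (max 1 Kη) (fun t => (t, η t)) (Icc 0 T) :=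
      (LipschitzWith.id.lipschitzOnWith).prodMk hηlip
    have hS : IsCompact ((fun t => (t, η t)) '' Icc 0 T) :=
      isCompact_Icc.image_of_continuousOn hgr.continuousOn
    have hSU : (fun t => (t, η t)) '' Icc 0 T ⊆ U := by
      rintro _ ⟨t, ht, rfl⟩; exact hηU t ht
    have hloc : LocallyLipschitzOn U Φ := fun z hz => hΦlip z hz
    obtain ⟨K, hK⟩ := (hloc.mono hSU).exists_lipschitzOnWith_of_compact hS
    have h1 := hK.comp hgr (mapsTo_image _ _)
    have h2 : LipschitzWith 1 (fun q : ℝ × (E n × E n) => q.2.2) := by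
      have := (LipschitzWith.prod_snd (α := E n) (β := E n)).comp
        (LipschitzWith.prod_snd (α := ℝ) (β := E n × E n))
      rw [mul_one] at this
      exact this
    exact ⟨_, h2.comp_lipschitzOnWith h1⟩
  obtain ⟨C, hCcomp, hCconv, hyC', hCO⟩ := aux_compact_hull hO hOconv
    (isCompact_Icc.image_of_continuousOn hKy.continuousOn)
    (by rintro _ ⟨t, ht, rfl⟩; exact (hyspec t ht).1)
  have hyC : ∀ t ∈ Icc 0 T, y t ∈ C := fun t ht => hyC' ⟨t, ht, rfl⟩
  have hxfC : xf ∈ C := hy0 ▸ hyC 0 h0I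
  -- Lipschitz constants on `C`
  have hgsm : ContDiffOn ℝ 1 g O := by
    have h1 : ContDiffOn ℝ 1 (fderiv ℝ c') O := hc'sm.fderiv_of_isOpen hO (by norm_cast)
    refine ContDiffOn.prodMk (ContDiffOn.neg ?_) contDiffOn_id
    exact (InnerProductSpace.toDual ℝ (E n)).symm.contDiff.comp_contDiffOn h1
  obtain ⟨Kg, hKg⟩ := (hgsm.mono hCO).exists_lipschitzOnWith one_ne_zero hCconv hCcomp
  obtain ⟨Kc, hKc⟩ := (hc'sm.mono hCO).exists_lipschitzOnWith (by simp) hCconv hCcomp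
  obtain ⟨B, hB⟩ := Metric.isBounded_iff.1 hCcomp.isBounded
  have hB0 : 0 ≤ B := dist_nonneg.trans (hB hxfC hxfC)
  have hAgen : ∀ t ∈ Icc 0 T, ∀ s ∈ Icc 0 T, ∀ x ∈ O, ∀ x' ∈ O,
      ‖A t x - A s x'‖ ≤ K0 * max |t - s| ‖g x - g x'‖ := by
    intro t ht s hs x hx x' hx'
    have := hK0.dist_le_mul (t, g x) ⟨ht, x, hx, rfl⟩ (s, g x') ⟨hs, x', hx', rfl⟩
    have e : dist ((t, g x) : ℝ × (E n × E n)) (s, g x') = max |t - s| ‖g x - g x'‖ := by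
      rw [Prod.dist_eq, Real.dist_eq, dist_eq_norm]
    rw [e, dist_eq_norm] at this
    exact this
  set M1 : ℝ := K0 * (1 + Kg) with hM1
  have hM1nn : 0 ≤ M1 := by positivity
  have hAlip : ∀ t ∈ Icc 0 T, ∀ s ∈ Icc 0 T, ∀ x ∈ C, ∀ x' ∈ C,
      ‖A t x - A s x'‖ ≤ M1 * (|t - s| + ‖x - x'‖) := by
    intro t ht s hs x hx x' hx'
    refine (hAgen t ht s hs x (hCO hx) x' (hCO hx')).trans ?_
    rw [hM1, mul_assoc]
    refine mul_le_mul_of_nonneg_left ?_ K0.2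
    have h1 := hKg.norm_sub_le hx hx'
    have h2 := abs_nonneg (t - s)
    have h3 := norm_nonneg (x - x')
    have h4 : (0:ℝ) ≤ Kg := Kg.2
    refine max_le ?_ (h1.trans ?_) <;> nlinarith
  have hAlipx : ∀ t ∈ Icc 0 T, ∀ x ∈ C, ∀ x' ∈ C, ‖A t x' - A t x‖ ≤ M1 * ‖x' - x‖ := by
    intro t ht x hx x' hx'
    simpa using hAlip t ht t ht x' hx' x hx
  have hAΩ : ∀ x ∈ O, ∀ t ∈ Icc 0 T, A t x ∈ Ω := hflowIn
  have hAt : ∀ x ∈ O, LipschitzOnWith K0 (fun t => A t x) (Icc 0 T) := by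
    intro x hx
    apply LipschitzOnWith.of_dist_le_mul
    intro t ht s hs
    have := hAgen t ht s hs x hx x hx
    simpa [dist_eq_norm] using this
  have hAc : ∀ t ∈ Icc 0 T, ContinuousOn (A t) O := by
    intro t ht
    refine hK0.continuousOn.comp (f := fun x => (t, g x)) ?_ ?_
    · exact continuousOn_const.prodMk hgsm.continuousOn
    · exact fun x hx => ⟨ht, x, hx, rfl⟩
  have hbd := aux_ae_bound hΩ hHC1 hAΩ hAc hAt hflowODE
  -- bounds on the Hamiltonian
  set MP : ℝ := ‖(A T xf).1‖ + M1 * (T + B) with hMP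
  have hMPnn : 0 ≤ MP := by positivity
  have hbdP : ∀ t ∈ Icc 0 T, ∀ x ∈ C, ‖(A t x).1‖ ≤ MP := by
    intro t ht x hx
    have h1 := hAlip t ht T hTI x hx xf hxfC
    have h2 : |t - T| ≤ T := by
      rw [abs_le]; constructor <;> linarith [ht.1, ht.2]
    have h3 : ‖x - xf‖ ≤ B := by simpa [dist_eq_norm] using hB hx hxfC
    have h4 : M1 * (|t - T| + ‖x - xf‖) ≤ M1 * (T + B) := by gcongr
    have h5 := norm_fst_le (A t x - A T xf)
    have h6 := norm_le_norm_add_norm_sub' (A t x).1 (A T xf).1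
    rw [Prod.fst_sub] at h5
    linarith
  set ML : ℝ := (2 * K0 + 1) * M1 with hML
  have hMLnn : 0 ≤ ML := by positivity
  have hlipH : ∀ᵐ t, t ∈ Icc 0 T → ∀ x ∈ C, ∀ x' ∈ C,
      |H t (A t x') - H t (A t x)| ≤ ML * ‖x' - x‖ := by
    filter_upwards [hbd] with t ht htI x hx x' hx'
    exact aux_lipH hΩ (hHC1 t htI) hCconv (hAlipx t htI) (fun x hx => hAΩ x (hCO hx) t htI)
      K0.2 (fun x hx => ht htI x (hCO hx)) hx hx'
  have ha0 : ∀ᵐ t : ℝ, t ≠ 0 := by simp [ae_iff, measure_singleton]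
  have haT : ∀ᵐ t : ℝ, t ≠ T := by simp [ae_iff, measure_singleton]
  have hbdH : ∀ᵐ t, t ∈ Icc 0 T → ∀ x ∈ C, |H t (A t x)| ≤ MP * Kξ + ML * B := by
    filter_upwards [hlipH, hrefmax, ha0, haT] with t h1 h2 h0 hT' ht x hx
    have htI : t ∈ Ioo 0 T :=
      ⟨lt_of_le_of_ne ht.1 (Ne.symm h0), lt_of_le_of_ne ht.2 hT'⟩
    obtain ⟨u, _, hu, hHu⟩ := h2 htI
    have hun := hu.le_of_lipschitzOn (Icc_mem_nhds htI.1 htI.2) hξlip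
    have h3 : |H t (A t xf)| ≤ MP * Kξ := by
      change |H t (𝓗 t (-gradient c' xf, xf))| ≤ _
      rw [hHu]
      exact (abs_real_inner_le_norm _ _).trans
        (mul_le_mul (hbdP t ht xf hxfC) hun (norm_nonneg _) hMPnn)
    have h4 := h1 ht xf hxfC x hx
    have h5 : ‖x - xf‖ ≤ B := by simpa [dist_eq_norm] using hB hx hxfC
    have h6 : ML * ‖x - xf‖ ≤ ML * B := by gcongr
    have h7 := abs_sub_abs_le_abs_sub (H t (A t x)) (H t (A t xf))
    linarith
  set MH : ℝ := MP * Kξ + ML * B with hMH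
  have hMHnn : 0 ≤ MH := by positivity
  have hK0nn : (0:ℝ) ≤ K0 := K0.2
  have hKcnn : (0:ℝ) ≤ Kc := Kc.2
  obtain ⟨M, hM⟩ : ∃ M : ℝ, M = M1 + MP + B + K0 + MH + ML + Kc := ⟨_, rfl⟩
  have hgT : ∀ x ∈ O, A T x = (-gradient c' x, x) := hflowT
  have D : CoreData T M C (fun t x => (A t x).1) (fun t x => (A t x).2)
      (fun t x => (hamVF (H t) (A t x)).1) (fun t x => (hamVF (H t) (A t x)).2)
      (fun t x => H t (A t x)) c' := by
    refine ⟨hT, by rw [hM]; positivity, ?_, ?_, ?_, ?_, ?_, ?_, ?_, ?_, ?_, ?_, ?_, ?_, ?_⟩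
    · intro t ht s hs x hx x' hx'
      refine (norm_fst_le (A t x - A s x')).trans ((hAlip t ht s hs x hx x' hx').trans ?_)
      refine mul_le_mul_of_nonneg_right (by linarith) (by positivity)
    · intro t ht s hs x hx x' hx'
      refine (norm_snd_le (A t x - A s x')).trans ((hAlip t ht s hs x hx x' hx').trans ?_)
      refine mul_le_mul_of_nonneg_right (by linarith) (by positivity)
    · intro t ht x hx
      exact (hbdP t ht x hx).trans (by linarith)
    · intro x hx x' hx'
      have : ‖x - x'‖ ≤ B := by simpa [dist_eq_norm] using hB hx hx'
      linarith
    · intro x hx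
      filter_upwards [hflowODE x (hCO hx)] with t ht hmem
      exact (ht hmem).fst
    · intro x hx
      filter_upwards [hflowODE x (hCO hx)] with t ht hmem
      exact (ht hmem).snd
    · filter_upwards [hbd, hbdH] with t h1 h2 ht x hx
      have h3 := h1 ht x (hCO hx)
      refine ⟨?_, ?_, ?_⟩
      · exact (norm_fst_le _).trans (h3.trans (by linarith))
      · exact (norm_snd_le _).trans (h3.trans (by linarith))
      · exact (h2 ht x hx).trans (by linarith)
    · filter_upwards [hlipH] with t h1 ht x hx x' hx'
      exact (h1 ht x hx x' hx').trans
        (mul_le_mul_of_nonneg_right (by linarith) (norm_nonneg _))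
    · filter_upwards with t ht x hx
      exact aux_small hΩ (hHC1 t ht) (hAlipx t ht) (fun x hx => hAΩ x (hCO hx) t ht) hx
    · intro x hx
      exact aux_meas hHmeas hHC1 (hAt x (hCO hx)).continuousOn
        (fun t ht => hAΩ x (hCO hx) t ht)
    · intro x hx
      have hd : DifferentiableAt ℝ c' x :=
        (hc'sm.contDiffAt (hO.mem_nhds (hCO hx))).differentiableAt (by simp)
      have h1 := (hd.hasGradientAt.hasFDerivAt.isLittleO.mono
        (nhdsWithin_le_nhds (s := C))).neg_left
      refine h1.congr_left fun x' => ?_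
      simp only [hgT x (hCO hx), InnerProductSpace.toDual_apply_apply, inner_neg_left]
      ring
    · intro x hx x' hx'
      have h1 := hKc.norm_sub_le hx' hx
      exact h1.trans (mul_le_mul_of_nonneg_right (by linarith) (norm_nonneg _))
    · intro x hx
      simp only [hgT x (hCO hx)]
  have hfin := D.main_ineq (K := Ky) Ky.2 (y := y) (η := η) hyC
    (fun t ht s hs => by simpa using hKy.norm_sub_le ht hs)
    (fun t ht => (hyspec t ht).2.symm)
    (by
      refine aux_meas hHmeas hHC1 (γ := fun t => A t (y t)) ?_
        (fun t ht => hAΩ _ (hyspec t ht).1 t ht)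
      refine hK0.continuousOn.comp (f := fun t => (t, g (y t))) ?_
        (fun t ht => ⟨ht, _, (hyspec t ht).1, rfl⟩)
      exact continuousOn_id.prodMk (hgsm.continuousOn.comp hKy.continuousOn
        (fun t ht => (hyspec t ht).1)))
    (by
      filter_upwards [hηae] with t h1 ht
      obtain ⟨u, hu, hdu⟩ := h1 ht
      have ht' := Ioo_subset_Icc_self ht
      refine ⟨u, hdu, hHmax t ht' _ (hAΩ _ (hyspec t ht').1 t ht') u ?_⟩
      rw [(hyspec t ht').2]
      exact hu)
  have hyT : y T = η T := by
    have := (hyspec T hTI).2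
    rwa [hgT _ (hyspec T hTI).1] at this
  have hint : ∫ s in (0:ℝ)..T, (⟪(A s xf).1, (hamVF (H s) (A s xf)).2⟫_ℝ - H s (A s xf)) = 0 := by
    apply intervalIntegral.integral_zero_ae
    filter_upwards [hrefmax, hflowODE xf hxfO, haT] with t h1 h2 hT' ht
    rw [uIoc_of_le hT.le] at ht
    have htI : t ∈ Ioo 0 T := ⟨ht.1, lt_of_le_of_ne ht.2 hT'⟩
    obtain ⟨u, _, hu, hHu⟩ := h1 htI
    have h3 : HasDerivAt (fun s => (A s xf).2) (hamVF (H t) (A t xf)).2 t :=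
      (h2 (Ioo_subset_Icc_self htI)).snd
    have h4 : HasDerivAt (fun s => (A s xf).2) u t := by
      refine hu.congr_of_eventuallyEq ?_
      filter_upwards [Icc_mem_nhds htI.1 htI.2] with s hs using hproj s hs
    rw [h3.unique h4]
    change _ - H t (𝓗 t (-gradient c' xf, xf)) = 0
    rw [hHu]
    exact sub_self _
  rw [hyT, hy0] at hfin
  simp only [CoreData.W, hint, sub_zero] at hfin
  rw [← hxf]
  linarith
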